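/- Let P be a Borel probability measure on X×Y, let L be a convex and separately Lipschitz continuous pairwise loss function with R_{L,P}(0) < ∞, and let H be the RKHS of a bounded measurable kernel over X. Then for every λ > 0 there exists a unique minimizer f_{L,P,λ} ∈ H of f ↦ R_{L,P}(f) + λ‖f‖_H², and it satisfies ‖f_{L,P,λ}‖_H ≤ (R_{L,P}(0)/λ)^{1/2}. -/

import Mathlib

open MeasureTheory
open scoped RealInnerProductSpace

/-!
Any two points at which the regularized risk `J` is at most `a` have a midpoint at which `J` is at
most `a - λ/4 * ‖f - g‖²`, by convexity of the risk and the parallelogram law. Minimizing sequences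
are therefore Cauchy, and lower semicontinuity of `J` makes their limit a minimizer. Lower
semicontinuity of the risk is Fatou's lemma, since a finite convex function on `ℝ²` is continuous
and so are point evaluations on `H`. Comparing the minimizer with `0` gives the norm bound.
-/

open Set Filter Topology
open scoped ENNReal NNReal

section Minimization

variable {E : Type*} {J : E → ℝ≥0∞} {φ : ℝ≥0∞ → ℝ≥0∞}

lemma edist_lt_of_lt_iInf_add [EDist E] (hφ : Monotone φ)
    (hJ : ∀ x y, ∃ z, J z + φ (edist x y) ≤ max (J x) (J y)) {x y : E} {ε : ℝ≥0∞}
    (hx : J x < (⨅ z, J z) + φ ε) (hy : J y < (⨅ z, J z) + φ ε) : edist x y < ε := by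
  obtain ⟨z, hz⟩ := hJ x y
  refine hφ.reflect_lt (lt_of_add_lt_add_left (a := ⨅ z, J z) ?_)
  calc (⨅ z, J z) + φ (edist x y) ≤ J z + φ (edist x y) := by gcongr; exact iInf_le J z
    _ ≤ max (J x) (J y) := hz
    _ < (⨅ z, J z) + φ ε := max_lt hx hy

theorem existsUnique_forall_le_of_lowerSemicontinuous [EMetricSpace E] [CompleteSpace E]
    (hφ : Monotone φ) (hφ₀ : ∀ ε, ε ≠ 0 → φ ε ≠ 0) (hlsc : LowerSemicontinuous J)
    (hJ : ∀ x y, ∃ z, J z + φ (edist x y) ≤ max (J x) (J y)) {x₀ : E} (hx₀ : J x₀ ≠ ∞) :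
    ∃! x, ∀ y, J x ≤ J y := by
  have : Nonempty E := ⟨x₀⟩
  have lt_iInf_add {ε : ℝ≥0∞} (hε : ε ≠ 0) : (⨅ z, J z) < (⨅ z, J z) + φ ε :=
    ENNReal.lt_add_right (ne_top_of_le_ne_top hx₀ (iInf_le J x₀)) (hφ₀ ε hε)
  obtain ⟨v, -, hv, hvJ⟩ := exists_seq_tendsto_sInf (range_nonempty J) (OrderBot.bddBelow _)
  choose u hu using hvJ
  obtain rfl : (fun n => J (u n)) = v := funext hu
  have hcauchy : CauchySeq u := by
    refine EMetric.cauchySeq_iff.2 fun ε hε => ?_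
    obtain ⟨N, hN⟩ := eventually_atTop.1 (hv.eventually_lt_const (lt_iInf_add hε.ne'))
    exact ⟨N, fun m hm n hn => edist_lt_of_lt_iInf_add hφ hJ (hN m hm) (hN n hn)⟩
  obtain ⟨x, hx⟩ := cauchySeq_tendsto_of_complete hcauchy
  have hxmin : J x ≤ ⨅ z, J z :=
    (hlsc.le_liminf x).trans (hx.liminf_le_liminf_comp.trans hv.liminf_eq.le)
  refine ⟨x, fun y => hxmin.trans (iInf_le J y), fun y hy => ?_⟩
  refine eq_of_forall_edist_le fun ε hε => (edist_lt_of_lt_iInf_add hφ hJ ?_ ?_).le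
  · exact (le_iInf hy).trans_lt (lt_iInf_add hε.ne')
  · exact hxmin.trans_lt (lt_iInf_add hε.ne')

end Minimization

section Regularization

variable {H : Type*} [NormedAddCommGroup H]

/-- The Tikhonov-regularized functional `f ↦ R f + l * ‖f‖²` of a risk functional `R`, for a
regularization parameter `l ≥ 0`; a negative `l` would act as `0`. -/
noncomputable def regularizedRisk (R : H → ℝ≥0∞) (l : ℝ) (f : H) : ℝ≥0∞ :=
  R f + ENNReal.ofReal (l * ‖f‖ ^ 2)

variable {R : H → ℝ≥0∞} {l : ℝ}

lemma lowerSemicontinuous_regularizedRisk (hR : LowerSemicontinuous R) (l : ℝ) :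
    LowerSemicontinuous (regularizedRisk R l) :=
  hR.add (ENNReal.continuous_ofReal.comp (by fun_prop)).lowerSemicontinuous

lemma norm_le_sqrt_of_regularizedRisk_le_zero {f : H} (hl : 0 < l) (hR₀ : R 0 ≠ ∞)
    (hf : regularizedRisk R l f ≤ regularizedRisk R l 0) : ‖f‖ ≤ √((R 0).toReal / l) := by
  have hpenalty : ENNReal.ofReal (l * ‖f‖ ^ 2) ≤ R 0 := by
    simpa [regularizedRisk] using le_add_self.trans hf
  refine Real.le_sqrt_of_sq_le ((le_div_iff₀' hl).2 ?_)
  exact (ENNReal.ofReal_le_iff_le_toReal hR₀).1 hpenalty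

variable [InnerProductSpace ℝ H]

lemma ofReal_mul_sq_norm_midpoint_add (hl : 0 ≤ l) (f g : H) :
    ENNReal.ofReal (l * ‖midpoint ℝ f g‖ ^ 2) + ENNReal.ofReal (l / 4) * edist f g ^ 2
      = (2⁻¹ : ℝ≥0) • ENNReal.ofReal (l * ‖f‖ ^ 2)
        + (2⁻¹ : ℝ≥0) • ENNReal.ofReal (l * ‖g‖ ^ 2) := by
  have hhalf (a : ℝ) : (2⁻¹ : ℝ≥0) • ENNReal.ofReal a = ENNReal.ofReal (2⁻¹ * a) := by
    rw [ENNReal.ofReal_mul (by positivity), ENNReal.smul_def, smul_eq_mul,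
      ← ENNReal.ofReal_coe_nnreal, NNReal.coe_inv, NNReal.coe_ofNat]
  rw [hhalf, hhalf, edist_dist, dist_eq_norm, ← ENNReal.ofReal_pow (by positivity),
    ← ENNReal.ofReal_mul (by positivity), ← ENNReal.ofReal_add (by positivity) (by positivity),
    ← ENNReal.ofReal_add (by positivity) (by positivity)]
  have hmedian :=
    EuclideanGeometry.dist_sq_add_dist_sq_eq_two_mul_dist_midpoint_sq_add_half_dist_sq (0 : H) f g
  simp only [dist_zero_left, dist_eq_norm f g] at hmedian
  congr 1
  linear_combination (-l / 2) * hmedian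

lemma regularizedRisk_midpoint_add_le_max (hR : ConvexOn ℝ≥0 univ R) (hl : 0 ≤ l) (f g : H) :
    regularizedRisk R l (midpoint ℝ f g) + ENNReal.ofReal (l / 4) * edist f g ^ 2
      ≤ max (regularizedRisk R l f) (regularizedRisk R l g) := by
  have hsum : (2⁻¹ : ℝ≥0) + 2⁻¹ = 1 := by norm_num
  have hmid : midpoint ℝ f g = (2⁻¹ : ℝ≥0) • f + (2⁻¹ : ℝ≥0) • g := by
    simp [midpoint_eq_smul_add, NNReal.smul_def]
  have hrisk : R (midpoint ℝ f g) ≤ (2⁻¹ : ℝ≥0) • R f + (2⁻¹ : ℝ≥0) • R g :=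
    hmid ▸ hR.2 (mem_univ f) (mem_univ g) zero_le zero_le hsum
  calc regularizedRisk R l (midpoint ℝ f g) + ENNReal.ofReal (l / 4) * edist f g ^ 2
      ≤ (2⁻¹ : ℝ≥0) • R f + (2⁻¹ : ℝ≥0) • R g
        + ((2⁻¹ : ℝ≥0) • ENNReal.ofReal (l * ‖f‖ ^ 2)
          + (2⁻¹ : ℝ≥0) • ENNReal.ofReal (l * ‖g‖ ^ 2)) := by
        rw [← ofReal_mul_sq_norm_midpoint_add hl, ← add_assoc, regularizedRisk]
        gcongr
    _ = (2⁻¹ : ℝ≥0) • regularizedRisk R l f + (2⁻¹ : ℝ≥0) • regularizedRisk R l g := by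
        simp only [regularizedRisk, smul_add]
        abel
    _ ≤ max (regularizedRisk R l f) (regularizedRisk R l g) :=
        Convex.combo_le_max _ _ zero_le zero_le hsum

theorem existsUnique_forall_regularizedRisk_le [CompleteSpace H] (hR : ConvexOn ℝ≥0 univ R)
    (hlsc : LowerSemicontinuous R) (hl : 0 < l) {f₀ : H} (hf₀ : R f₀ ≠ ∞) :
    ∃! f, ∀ g, regularizedRisk R l f ≤ regularizedRisk R l g :=
  existsUnique_forall_le_of_lowerSemicontinuous
    (φ := fun d => ENNReal.ofReal (l / 4) * d ^ 2) (fun _ _ h => by dsimp only; gcongr)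
    (fun ε hε => mul_ne_zero (ENNReal.ofReal_pos.2 (by positivity)).ne' (pow_ne_zero 2 hε))
    (lowerSemicontinuous_regularizedRisk hlsc l)
    (fun f g => ⟨midpoint ℝ f g, regularizedRisk_midpoint_add_le_max hR hl.le f g⟩)
    (ENNReal.add_ne_top.2 ⟨hf₀, ENNReal.ofReal_ne_top⟩)

end Regularization

section Convexity

lemma convexOn_ennreal_ofReal {E : Type*} [AddCommMonoid E] [Module ℝ E] {s : Set E}
    {g : E → ℝ} (hg : ConvexOn ℝ s g) : ConvexOn ℝ≥0 s fun x => ENNReal.ofReal (g x) := by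
  refine ⟨fun x hx y hy a b _ _ hab => hg.1 hx hy a.2 b.2 (by exact_mod_cast hab),
    fun x hx y hy a b _ _ hab => ?_⟩
  have hconv : g (a • x + b • y) ≤ a * g x + b * g y :=
    hg.2 hx hy a.coe_nonneg b.coe_nonneg (by exact_mod_cast hab)
  calc ENNReal.ofReal (g (a • x + b • y))
      ≤ ENNReal.ofReal (a * g x) + ENNReal.ofReal (b * g y) :=
        (ENNReal.ofReal_le_ofReal hconv).trans ENNReal.ofReal_add_le
    _ = a • ENNReal.ofReal (g x) + b • ENNReal.ofReal (g y) := by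
        simp only [ENNReal.ofReal_mul, NNReal.zero_le_coe, ENNReal.ofReal_coe_nnreal,
          ENNReal.smul_def, smul_eq_mul]

lemma continuous_of_convexOn_univ {E : Type*} [NormedAddCommGroup E] [NormedSpace ℝ E]
    [FiniteDimensional ℝ E] {g : E → ℝ} (hg : ConvexOn ℝ univ g) : Continuous g :=
  continuousOn_univ.1 (hg.continuousOn isOpen_univ)

variable {Z : Type*} [MeasurableSpace Z] {μ : Measure Z} {E : Type*} {F : Z → E → ℝ≥0∞}

lemma convexOn_lintegral [AddCommMonoid E] [SMul ℝ≥0 E] {s : Set E} (hs : Convex ℝ≥0 s)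
    (hmeas : ∀ f, Measurable fun z => F z f) (hconv : ∀ z, ConvexOn ℝ≥0 s (F z)) :
    ConvexOn ℝ≥0 s fun f => ∫⁻ z, F z f ∂μ := by
  refine ⟨hs, fun f hf g hg a b ha hb hab => ?_⟩
  calc ∫⁻ z, F z (a • f + b • g) ∂μ
      ≤ ∫⁻ z, (a * F z f + b * F z g) ∂μ := lintegral_mono fun z => (hconv z).2 hf hg ha hb hab
    _ = a • ∫⁻ z, F z f ∂μ + b • ∫⁻ z, F z g ∂μ := by
      rw [lintegral_add_left ((hmeas f).const_mul _), lintegral_const_mul _ (hmeas f),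
        lintegral_const_mul _ (hmeas g), ENNReal.smul_def, ENNReal.smul_def, smul_eq_mul,
        smul_eq_mul]

lemma lowerSemicontinuous_lintegral [TopologicalSpace E] [FirstCountableTopology E]
    (hmeas : ∀ f, Measurable fun z => F z f) (hlsc : ∀ z, LowerSemicontinuous (F z)) :
    LowerSemicontinuous fun f => ∫⁻ z, F z f ∂μ :=
  lowerSemicontinuous_iff_le_liminf.2 fun f =>
    calc ∫⁻ z, F z f ∂μ ≤ ∫⁻ z, liminf (F z) (𝓝 f) ∂μ :=
          lintegral_mono fun z => (hlsc z).le_liminf f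
      _ ≤ liminf (fun g => ∫⁻ z, F z g ∂μ) (𝓝 f) := lintegral_liminf_le hmeas

end Convexity

section PairwiseRisk

variable {X Y : Type*} [MeasurableSpace X] [MeasurableSpace Y]

/-- The risk of `f : X → ℝ` for the pairwise loss `L` under the law `μ` of a pair of observations.
The risk `R_{L,P}(f)` is the case `μ = P ⊗ P`. Losses may take the value `∞`. -/
noncomputable def pairwiseRisk (L : X → Y → X → Y → ℝ → ℝ → ℝ≥0∞) (μ : Measure ((X × Y) × (X × Y)))
    (f : X → ℝ) : ℝ≥0∞ :=
  ∫⁻ z, L z.1.1 z.1.2 z.2.1 z.2.2 (f z.1.1) (f z.2.1) ∂μ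

variable {L : X → Y → X → Y → ℝ → ℝ → ℝ≥0∞} {μ : Measure ((X × Y) × (X × Y))}
  {H : Type*} [NormedAddCommGroup H] [InnerProductSpace ℝ H] {Φ : X → H}

lemma measurable_pairwiseLoss_comp
    (hL : Measurable fun p : (X × Y) × (X × Y) × ℝ × ℝ =>
      L p.1.1 p.1.2 p.2.1.1 p.2.1.2 p.2.2.1 p.2.2.2) {f : X → ℝ} (hf : Measurable f) :
    Measurable fun z : (X × Y) × (X × Y) => L z.1.1 z.1.2 z.2.1 z.2.2 (f z.1.1) (f z.2.1) :=
  hL.comp (by fun_prop : Measurable fun z : (X × Y) × (X × Y) => (z.1, z.2, f z.1.1, f z.2.1))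

lemma convexOn_pairwiseRisk_inner
    (hL : Measurable fun p : (X × Y) × (X × Y) × ℝ × ℝ =>
      L p.1.1 p.1.2 p.2.1.1 p.2.1.2 p.2.2.1 p.2.2.2)
    (hconv : ∀ x y x' y', ConvexOn ℝ≥0 univ fun t : ℝ × ℝ => L x y x' y' t.1 t.2)
    (hΦ : ∀ f : H, Measurable fun x => ⟪f, Φ x⟫) :
    ConvexOn ℝ≥0 univ fun f : H => pairwiseRisk L μ fun x => ⟪f, Φ x⟫ :=
  convexOn_lintegral convex_univ (fun f => measurable_pairwiseLoss_comp hL (hΦ f)) fun z =>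
    (hconv z.1.1 z.1.2 z.2.1 z.2.2).comp_linearMap
      (((innerSLFlip ℝ (Φ z.1.1)).prod (innerSLFlip ℝ (Φ z.2.1))).toLinearMap.restrictScalars ℝ≥0)

lemma lowerSemicontinuous_pairwiseRisk_inner
    (hL : Measurable fun p : (X × Y) × (X × Y) × ℝ × ℝ =>
      L p.1.1 p.1.2 p.2.1.1 p.2.1.2 p.2.2.1 p.2.2.2)
    (hlsc : ∀ x y x' y', LowerSemicontinuous fun t : ℝ × ℝ => L x y x' y' t.1 t.2)
    (hΦ : ∀ f : H, Measurable fun x => ⟪f, Φ x⟫) :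
    LowerSemicontinuous fun f : H => pairwiseRisk L μ fun x => ⟪f, Φ x⟫ :=
  lowerSemicontinuous_lintegral (fun f => measurable_pairwiseLoss_comp hL (hΦ f)) fun z =>
    (hlsc z.1.1 z.1.2 z.2.1 z.2.2).comp
      (by fun_prop : Continuous fun f : H => (⟪f, Φ z.1.1⟫, ⟪f, Φ z.2.1⟫))

end PairwiseRisk

theorem rpl_exists_unique_minimizer_norm_bound_general
    {X Y : Type*} [MeasurableSpace X] [MeasurableSpace Y]
    (L : X → Y → X → Y → ℝ → ℝ → ℝ≥0∞)
    (hL_meas : Measurable fun p : (X × Y) × (X × Y) × ℝ × ℝ =>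
      L p.1.1 p.1.2 p.2.1.1 p.2.1.2 p.2.2.1 p.2.2.2)
    (hL_convex : ∀ x y x' y', ConvexOn ℝ≥0 univ fun t : ℝ × ℝ => L x y x' y' t.1 t.2)
    (hL_lsc : ∀ x y x' y', LowerSemicontinuous fun t : ℝ × ℝ => L x y x' y' t.1 t.2)
    {H : Type*} [NormedAddCommGroup H] [InnerProductSpace ℝ H] [CompleteSpace H]
    (Φ : X → H) (hΦmeas : ∀ f : H, Measurable fun x => ⟪f, Φ x⟫)
    (μ : Measure ((X × Y) × (X × Y))) (hR0 : pairwiseRisk L μ 0 < ∞) (l : ℝ) (hl : 0 < l) :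
    let J : H → ℝ≥0∞ := regularizedRisk (fun f => pairwiseRisk L μ fun x => ⟪f, Φ x⟫) l
    ∃ fmin : H, (∀ g, J fmin ≤ J g) ∧ (∀ f', (∀ g, J f' ≤ J g) → f' = fmin) ∧
      ‖fmin‖ ≤ √((pairwiseRisk L μ 0).toReal / l) := by
  intro J
  have hzero : pairwiseRisk L μ (fun x => ⟪(0 : H), Φ x⟫) = pairwiseRisk L μ 0 := by
    simp only [inner_zero_left]; rfl
  have hfinite : pairwiseRisk L μ (fun x => ⟪(0 : H), Φ x⟫) ≠ ∞ := hzero ▸ hR0.ne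
  obtain ⟨fmin, hmin, huniq⟩ := existsUnique_forall_regularizedRisk_le
    (convexOn_pairwiseRisk_inner (μ := μ) hL_meas hL_convex hΦmeas)
    (lowerSemicontinuous_pairwiseRisk_inner hL_meas hL_lsc hΦmeas) hl hfinite
  exact ⟨fmin, hmin, huniq,
    hzero ▸ norm_le_sqrt_of_regularizedRisk_le_zero hl hfinite (hmin 0)⟩

/-- **Existence and uniqueness.** If `L` is a convex, separately Lipschitz continuous pairwise
loss with `R_{L,P}(0) < ∞`, and `H` is the RKHS of a bounded measurable kernel (feature map
`Φ`, `‖Φ x‖ ≤ κ`, `f(x) = ⟪f, Φ x⟫`), then for every `λ > 0` there is a unique minimizer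
`f_{L,P,λ}` of `f ↦ R_{L,P}(f) + λ‖f‖²_H`, and `‖f_{L,P,λ}‖_H ≤ (R_{L,P}(0)/λ)^{1/2}`. -/
theorem rpl_exists_unique_minimizer_norm_bound
    {X : Type*} [MeasurableSpace X] {Y : Set ℝ} (hY : IsClosed Y)
    (L : X → Y → X → Y → ℝ → ℝ → ℝ)
    (hL_nonneg : ∀ x y x' y' t t', 0 ≤ L x y x' y' t t')
    (hL_meas : Measurable fun p : (X × Y) × (X × Y) × ℝ × ℝ =>
      L p.1.1 p.1.2 p.2.1.1 p.2.1.2 p.2.2.1 p.2.2.2)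
    (hL_convex : ∀ x y x' y',
      ConvexOn ℝ Set.univ fun t : ℝ × ℝ => L x y x' y' t.1 t.2)
    (L₁ : ℝ) (hL₁ : 0 ≤ L₁)
    (hLip : ∀ x y x' y' t₁ t₂ s₁ s₂,
      |L x y x' y' t₁ t₂ - L x y x' y' s₁ s₂| ≤ L₁ * (|t₁ - s₁| + |t₂ - s₂|))
    {H : Type*} [NormedAddCommGroup H] [InnerProductSpace ℝ H] [CompleteSpace H]
    (Φ : X → H) (κ : ℝ) (hκ : ∀ x, ‖Φ x‖ ≤ κ)
    (hΦmeas : ∀ f : H, Measurable fun x => ⟪f, Φ x⟫)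
    (P : Measure (X × Y)) [IsProbabilityMeasure P]
    (hR0 : (∫⁻ z : (X × Y) × (X × Y), ENNReal.ofReal
        (L z.1.1 z.1.2 z.2.1 z.2.2 0 0) ∂(P.prod P)) < ⊤)
    (l : ℝ) (hl : 0 < l) :
    ∃ fmin : H,
      (∀ g : H,
        (∫⁻ z : (X × Y) × (X × Y), ENNReal.ofReal
            (L z.1.1 z.1.2 z.2.1 z.2.2 ⟪fmin, Φ z.1.1⟫ ⟪fmin, Φ z.2.1⟫) ∂(P.prod P))
          + ENNReal.ofReal (l * ‖fmin‖ ^ 2)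
        ≤ (∫⁻ z : (X × Y) × (X × Y), ENNReal.ofReal
            (L z.1.1 z.1.2 z.2.1 z.2.2 ⟪g, Φ z.1.1⟫ ⟪g, Φ z.2.1⟫) ∂(P.prod P))
          + ENNReal.ofReal (l * ‖g‖ ^ 2)) ∧
      (∀ f' : H,
        (∀ g : H,
          (∫⁻ z : (X × Y) × (X × Y), ENNReal.ofReal
              (L z.1.1 z.1.2 z.2.1 z.2.2 ⟪f', Φ z.1.1⟫ ⟪f', Φ z.2.1⟫) ∂(P.prod P))
            + ENNReal.ofReal (l * ‖f'‖ ^ 2)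
          ≤ (∫⁻ z : (X × Y) × (X × Y), ENNReal.ofReal
              (L z.1.1 z.1.2 z.2.1 z.2.2 ⟪g, Φ z.1.1⟫ ⟪g, Φ z.2.1⟫) ∂(P.prod P))
            + ENNReal.ofReal (l * ‖g‖ ^ 2)) → f' = fmin) ∧
      ‖fmin‖ ≤ Real.sqrt
        ((∫⁻ z : (X × Y) × (X × Y), ENNReal.ofReal
            (L z.1.1 z.1.2 z.2.1 z.2.2 0 0) ∂(P.prod P)).toReal / l) := by
  exact rpl_exists_unique_minimizer_norm_bound_general
    (fun x y x' y' t t' => ENNReal.ofReal (L x y x' y' t t')) hL_meas.ennreal_ofReal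
    (fun x y x' y' => convexOn_ennreal_ofReal (hL_convex x y x' y'))
    (fun x y x' y' => (ENNReal.continuous_ofReal.comp
      (continuous_of_convexOn_univ (hL_convex x y x' y'))).lowerSemicontinuous)
    Φ hΦmeas (P.prod P) hR0 l hl
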